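/- Let 0<s<1, let ω satisfy (h), and suppose there exist κ≥2 and c>0 such that ω(θ)≥c·|θ−π/2|^κ for all θ∈[0,π]. Then there exists a constant C>0 (depending only on s and ω) such that for every α>0 and every probability measure ρ minimizing E_α among probability measures on ℝ² and having zero center of mass ∫x dρ(x)=0, one has sup{|x₁| : x∈supp ρ} ≤ C·α^{−1/(κ+1)}. -/

import Mathlib

/-!
The energy of a minimizer `ρ` is bounded independently of `α`: Lebesgue measure on a vertical unit
segment has finite energy because `s < 1`, and `ω (π / 2) = 0` removes `α` from it
(`energy_bound`). Comparing `ρ` with its normalized restriction to a sublevel set of the potential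
`V = W * ρ` shows that `V ≤ M` holds `ρ`-almost everywhere, with `M` independent of `α`
(`potential_bound`).

Since `ρ` is centered, each coordinate satisfies `x_i = ∫ (x_i - y_i) dρ(y)`
(`abs_le_of_lintegral`), so any pointwise bound of `|x_i - y_i|` by `W (x - y)` turns into a bound
of `x_i`. The quadratic part of `W` first confines `ρ` to a fixed box. Inside that box
the growth of `ω` gives `W z ≥ const * α * |z₁| ^ κ`, and the inequality
`a ≤ t + t ^ (1 - κ) * a ^ κ` with `t = α ^ (-1 / (κ + 1))` yields the claim for `α ≥ 1`
(`abs_fst_le_Wkernel`). For `α ≤ 1` the box alone suffices. The resulting set is closed and has full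
measure, hence contains the support.
-/

open MeasureTheory Real Filter Set Topology
open scoped ENNReal

noncomputable section

namespace Aniso

/-- The Euclidean norm on `ℝ × ℝ`. -/
def nrm (x : ℝ × ℝ) : ℝ := Real.sqrt (x.1 ^ 2 + x.2 ^ 2)

/-- The angle `θ(x) ∈ [-π, π)` of a nonzero point `x ∈ ℝ²`,
so that `x / |x| = (cos (ang x), sin (ang x))`. -/
def ang (x : ℝ × ℝ) : ℝ :=
  if Complex.arg ⟨x.1, x.2⟩ = π then -π else Complex.arg ⟨x.1, x.2⟩

/-- The unit vector `e_φ = (cos φ, sin φ)`. -/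
def eVec (φ : ℝ) : ℝ × ℝ := (Real.cos φ, Real.sin φ)

/-- The constant `τ_s = (2π)^{-s} Γ(s) cos(sπ/2)`. -/
def tauC (s : ℝ) : ℝ := (2 * π) ^ (-s) * Real.Gamma s * Real.cos (s * π / 2)

/-- The constant `c_s = π^{s-1} Γ((2-s)/2) / Γ(s/2)`. -/
def cC (s : ℝ) : ℝ := π ^ (s - 1) * Real.Gamma ((2 - s) / 2) / Real.Gamma (s / 2)

/-- Hypothesis (H): `Ω` is smooth, 2π-periodic, strictly positive and π-periodic. -/
def SatisfiesH (Ω : ℝ → ℝ) : Prop :=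
  ContDiff ℝ (⊤ : ℕ∞) Ω ∧ (∀ θ, Ω (θ + 2 * π) = Ω θ) ∧ (∀ θ, 0 < Ω θ) ∧ ∀ θ, Ω (θ + π) = Ω θ

/-- Hypothesis (h): `ω` is smooth, 2π-periodic, nonnegative, not identically zero,
π-periodic, and `ω(π/2) = 0`. -/
def Satisfiesh (ω : ℝ → ℝ) : Prop :=
  ContDiff ℝ (⊤ : ℕ∞) ω ∧ (∀ θ, ω (θ + 2 * π) = ω θ) ∧ (∀ θ, 0 ≤ ω θ) ∧ (∃ θ, ω θ ≠ 0) ∧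
    (∀ θ, ω (θ + π) = ω θ) ∧ ω (π / 2) = 0

/-- The transformed angle function `Ω̃`. -/
def Omt (s : ℝ) (Ω : ℝ → ℝ) (φ : ℝ) : ℝ :=
  tauC (2 - s) * (∫ θ in (-π)..π, |Real.cos (φ - θ)| ^ (-2 + s) * (Ω θ - Ω (φ + π / 2)))
    + cC s * Ω (φ + π / 2)

/-- The interaction potential `W(x) = |x|^{-s} Ω(θ(x)) + |x|²` as an `[0,∞]`-valued
kernel, with `W(0) = ∞`. -/
def Wkernel (s : ℝ) (Ω : ℝ → ℝ) (x : ℝ × ℝ) : ℝ≥0∞ :=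
  if x = 0 then ⊤ else ENNReal.ofReal (nrm x ^ (-s) * Ω (ang x) + nrm x ^ 2)

/-- The interaction energy `E[ρ] = (1/2) ∬ W(x-y) dρ(y) dρ(x) ∈ [0,∞]`. -/
def energy (s : ℝ) (Ω : ℝ → ℝ) (ρ : Measure (ℝ × ℝ)) : ℝ≥0∞ :=
  (1 / 2 : ℝ≥0∞) * ∫⁻ x, ∫⁻ y, Wkernel s Ω (x - y) ∂ρ ∂ρ

/-- The real-valued interaction potential (with junk value `0` at the origin,
which is Lebesgue negligible). -/
def Wr (s : ℝ) (Ω : ℝ → ℝ) (x : ℝ × ℝ) : ℝ := nrm x ^ (-s) * Ω (ang x) + nrm x ^ 2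

/-- `ρ` minimizes the energy `E` among probability measures on `ℝ²`. -/
def IsMinimizer (E : Measure (ℝ × ℝ) → ℝ≥0∞) (ρ : Measure (ℝ × ℝ)) : Prop :=
  IsProbabilityMeasure ρ ∧ ∀ μ : Measure (ℝ × ℝ), IsProbabilityMeasure μ → E ρ ≤ E μ

/-- `ρ` is the unique minimizer of `E` up to translation: it is a minimizer and every
minimizer is a translate of it. -/
def IsUniqueMinimizer (E : Measure (ℝ × ℝ) → ℝ≥0∞) (ρ : Measure (ℝ × ℝ)) : Prop :=
  IsMinimizer E ρ ∧ ∀ μ, IsMinimizer E μ → ∃ v : ℝ × ℝ, μ = Measure.map (fun x => x + v) ρ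

def R2 (s : ℝ) : ℝ := (8 * Real.sin (s * π / 2) / (s ^ 2 * (2 + s) * π)) ^ (-(1 / (s + 2)))

def C2 (s : ℝ) : ℝ := 4 * Real.sin (s * π / 2) / (s ^ 2 * π ^ 2)

/-- The density `ρ₂(x) = C₂ (R₂² - |x|²)₊^{s/2}`. -/
def rho2 (s : ℝ) (x : ℝ × ℝ) : ℝ := C2 s * (max (R2 s ^ 2 - nrm x ^ 2) 0) ^ (s / 2)

def rho2meas (s : ℝ) : Measure (ℝ × ℝ) := volume.withDensity fun x => ENNReal.ofReal (rho2 s x)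

/-- Counterclockwise rotation of `ℝ²` by the angle `η`. -/
def Rot (η : ℝ) (x : ℝ × ℝ) : ℝ × ℝ :=
  (x.1 * Real.cos η - x.2 * Real.sin η, x.1 * Real.sin η + x.2 * Real.cos η)

/-- The measure `ρ_{a,b,η}`: the pushforward of `ρ₂(x) dx` under `x ↦ R_η (a x₁, b x₂)`. -/
def rhoE (s a b η : ℝ) : Measure (ℝ × ℝ) :=
  Measure.map (fun x => Rot η (a * x.1, b * x.2)) (rho2meas s)

/-- The measure `ρ_{a,b} = ρ_{a,b,0}`. -/
def rhoAB (s a b : ℝ) : Measure (ℝ × ℝ) := rhoE s a b 0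

/-- The Beta function. -/
def BetaR (x y : ℝ) : ℝ := Real.Gamma x * Real.Gamma y / Real.Gamma (x + y)

def C1 (s : ℝ) : ℝ := 2 * Real.cos (s * π / 2) / (s * (s + 1) * π)

def R1 (s : ℝ) : ℝ := (C1 s * BetaR (1 / 2) ((3 + s) / 2)) ^ (-(1 / (s + 2)))

/-- The density `ρ₁(t) = C₁ (R₁² - t²)₊^{(1+s)/2}` on `ℝ`. -/
def rho1 (s t : ℝ) : ℝ := C1 s * (max (R1 s ^ 2 - t ^ 2) 0) ^ ((1 + s) / 2)

def rho1meas (s : ℝ) : Measure ℝ := volume.withDensity fun t => ENNReal.ofReal (rho1 s t)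

/-- The measure `ρ_{1D}`: the pushforward of `ρ₁(t) dt` under `t ↦ (0, t)`. -/
def rho1D (s : ℝ) : Measure (ℝ × ℝ) := Measure.map (fun t : ℝ => ((0 : ℝ), t)) (rho1meas s)

/-- The support of a measure: points all of whose neighborhoods have positive measure. -/
def msupport {α : Type*} [TopologicalSpace α] [MeasurableSpace α] (μ : Measure α) : Set α :=
  {x | ∀ U ∈ 𝓝 x, 0 < μ U}

def Acoef (s : ℝ) (Ω : ℝ → ℝ) (a b : ℝ) : ℝ :=
  tauC s * (R1 s / R2 s) ^ (2 + s) *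
    ∫ φ in (-π)..π,
      (a ^ 2 * Real.cos φ ^ 2 + b ^ 2 * Real.sin φ ^ 2) ^ (-(2 + s) / 2) *
        Real.cos φ ^ 2 * Omt s Ω φ

def Bcoef (s : ℝ) (Ω : ℝ → ℝ) (a b : ℝ) : ℝ :=
  tauC s * (R1 s / R2 s) ^ (2 + s) *
    ∫ φ in (-π)..π,
      (a ^ 2 * Real.cos φ ^ 2 + b ^ 2 * Real.sin φ ^ 2) ^ (-(2 + s) / 2) *
        Real.sin φ ^ 2 * Omt s Ω φ

def Dcoef (s : ℝ) (Ω : ℝ → ℝ) (a b : ℝ) : ℝ :=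
  tauC s * (R1 s / R2 s) ^ (2 + s) *
    ∫ φ in (-π)..π,
      (a ^ 2 * Real.cos φ ^ 2 + b ^ 2 * Real.sin φ ^ 2) ^ (-(2 + s) / 2) *
        (Real.cos φ * Real.sin φ) * Omt s Ω φ

def Mfun (s : ℝ) (Ω : ℝ → ℝ) (a b : ℝ) : ℝ :=
  tauC s * (R1 s / R2 s) ^ (2 + s) *
    ∫ φ in (-π)..π, (a ^ 2 * Real.cos φ ^ 2 + b ^ 2 * Real.sin φ ^ 2) ^ (-s / 2) * Omt s Ω φ

def calE (s : ℝ) (Ω : ℝ → ℝ) (a b : ℝ) : ℝ := Mfun s Ω a b + s / 2 * (a ^ 2 + b ^ 2)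

/-- A measure has compact support. -/
def HasCompactSupportM (ρ : Measure (ℝ × ℝ)) : Prop :=
  ∃ K : Set (ℝ × ℝ), IsCompact K ∧ ρ Kᶜ = 0

/-- The linear interpolation `(1-t) ρ₀ + t ρ₁`. -/
def mix (ρ₀ ρ₁ : Measure (ℝ × ℝ)) (t : ℝ) : Measure (ℝ × ℝ) :=
  ENNReal.ofReal (1 - t) • ρ₀ + ENNReal.ofReal t • ρ₁

/-- Linear interpolation convexity (LIC): for any two distinct compactly supported
probability measures of finite energy with the same center of mass, the energy is
strictly convex along their linear interpolation. -/
def LIC (s : ℝ) (Ω : ℝ → ℝ) : Prop :=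
  ∀ ρ₀ ρ₁ : Measure (ℝ × ℝ), IsProbabilityMeasure ρ₀ → IsProbabilityMeasure ρ₁ →
    HasCompactSupportM ρ₀ → HasCompactSupportM ρ₁ →
    energy s Ω ρ₀ < ⊤ → energy s Ω ρ₁ < ⊤ → ρ₀ ≠ ρ₁ →
    (∫ x, x ∂ρ₀) = (∫ x, x ∂ρ₁) →
    StrictConvexOn ℝ (Set.Icc (0 : ℝ) 1) fun t => (energy s Ω (mix ρ₀ ρ₁ t)).toReal

/-- The interaction energy of a bounded compactly supported signed density. -/
def energyR (s : ℝ) (Ω : ℝ → ℝ) (μ : ℝ × ℝ → ℝ) : ℝ :=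
  (1 / 2) * ∫ x : ℝ × ℝ, (∫ y : ℝ × ℝ, Wr s Ω (x - y) * μ y) * μ x

/-- The logarithmic potential `W_log(x) = -ln|x| + Ω(θ(x)) + |x|²` (real valued,
with junk value at the origin). -/
def Wlog (Ω : ℝ → ℝ) (x : ℝ × ℝ) : ℝ := -Real.log (nrm x) + Ω (ang x) + nrm x ^ 2

def WlogKernel (Ω : ℝ → ℝ) (x : ℝ × ℝ) : ℝ≥0∞ :=
  if x = 0 then ⊤ else ENNReal.ofReal (Wlog Ω x)

/-- The logarithmic interaction energy. -/
def energyLog (Ω : ℝ → ℝ) (ρ : Measure (ℝ × ℝ)) : ℝ≥0∞ :=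
  (1 / 2 : ℝ≥0∞) * ∫⁻ x, ∫⁻ y, WlogKernel Ω (x - y) ∂ρ ∂ρ

/-- The family `W_{(s)}(x) = |x|^{-s} (1/s + Ω(θ(x))) - 1/s + |x|²`. -/
def Wsfam (s : ℝ) (Ω : ℝ → ℝ) (x : ℝ × ℝ) : ℝ :=
  nrm x ^ (-s) * (1 / s + Ω (ang x)) - 1 / s + nrm x ^ 2

/-- The transformed angle function of `W_{(s)}`. -/
def Omts (s : ℝ) (Ω : ℝ → ℝ) (φ : ℝ) : ℝ :=
  tauC (2 - s) * (∫ θ in (-π)..π, |Real.cos (φ - θ)| ^ (-2 + s) * (Ω θ - Ω (φ + π / 2)))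
    + cC s * (1 / s + Ω (φ + π / 2))

/-- The truncated integral appearing in the principal value defining `Ω̃_log`. -/
def pvInt (Ω : ℝ → ℝ) (φ δ : ℝ) : ℝ :=
  ∫ θ in {θ : ℝ | θ ∈ Set.Icc (-π) π ∧ δ ≤ |Real.cos (φ - θ)|},
    |Real.cos (φ - θ)| ^ (-(2 : ℝ)) * (Ω θ - Ω (φ + π / 2))

def OmtLogFam (Ω : ℝ → ℝ) (φ δ : ℝ) : ℝ :=
  -((2 * π) ^ (-(2 : ℝ))) * pvInt Ω φ δ + (2 * π)⁻¹

/-- The transformed angle function `Ω̃_log`, defined as the principal value limit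
(via `limUnder`, which returns the limit whenever it exists). -/
def OmtLog (Ω : ℝ → ℝ) (φ : ℝ) : ℝ := limUnder (𝓝[>] (0 : ℝ)) (OmtLogFam Ω φ)

/-- The closed elliptical region `B(0; a, b)`. -/
def ellipseSet (a b : ℝ) : Set (ℝ × ℝ) := {x | x.1 ^ 2 / a ^ 2 + x.2 ^ 2 / b ^ 2 ≤ 1}

def ALog (Ω : ℝ → ℝ) (a b : ℝ) : ℝ :=
  ∫ φ in (-π)..π,
    (a ^ 2 * Real.cos φ ^ 2 + b ^ 2 * Real.sin φ ^ 2)⁻¹ * Real.cos φ ^ 2 * OmtLog Ω φ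

def BLog (Ω : ℝ → ℝ) (a b : ℝ) : ℝ :=
  ∫ φ in (-π)..π,
    (a ^ 2 * Real.cos φ ^ 2 + b ^ 2 * Real.sin φ ^ 2)⁻¹ * Real.sin φ ^ 2 * OmtLog Ω φ

def DLog (Ω : ℝ → ℝ) (a b : ℝ) : ℝ :=
  ∫ φ in (-π)..π,
    (a ^ 2 * Real.cos φ ^ 2 + b ^ 2 * Real.sin φ ^ 2)⁻¹ *
      (Real.cos φ * Real.sin φ) * OmtLog Ω φ

/-- The uniform probability measure on the rotated ellipse `B(0; a, b, η)`. -/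
def unifEllipse (a b η : ℝ) : Measure (ℝ × ℝ) :=
  volume.withDensity ((Rot η '' ellipseSet a b).indicator fun _ => ENNReal.ofReal ((π * a * b)⁻¹))

/-- The pushforward of the density `(2/(πb²)) (b² - t²)₊^{1/2} dt` under `t ↦ R_η (0, t)`. -/
def semicirc (b η : ℝ) : Measure (ℝ × ℝ) :=
  Measure.map (fun t : ℝ => Rot η (0, t))
    (volume.withDensity fun t =>
      ENNReal.ofReal (2 / (π * b ^ 2) * (max (b ^ 2 - t ^ 2) 0) ^ ((1 : ℝ) / 2)))

/-- The vertical semicircle measure `ρ_{1D}` for the logarithmic case. -/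
def rho1Dlog : Measure (ℝ × ℝ) :=
  Measure.map (fun t : ℝ => ((0 : ℝ), t))
    (volume.withDensity fun t => ENNReal.ofReal (2 / π * (max (1 - t ^ 2) 0) ^ ((1 : ℝ) / 2)))

/-- The measure `ψ(t) dt` placed on the vertical axis. -/
def rhoPsi (ψ : ℝ → ℝ) : Measure (ℝ × ℝ) :=
  Measure.map (fun t : ℝ => ((0 : ℝ), t)) (volume.withDensity fun t => ENNReal.ofReal (ψ t))

/-! ### The kernel -/

lemma nrm_nonneg (z : ℝ × ℝ) : 0 ≤ nrm z := Real.sqrt_nonneg _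

lemma nrm_sq (z : ℝ × ℝ) : nrm z ^ 2 = z.1 ^ 2 + z.2 ^ 2 :=
  Real.sq_sqrt (by positivity)

lemma nrm_pos {z : ℝ × ℝ} (hz : z ≠ 0) : 0 < nrm z := by
  apply Real.sqrt_pos.2
  by_contra h
  apply hz
  have h1 : z.1 = 0 := by nlinarith [sq_nonneg z.1, sq_nonneg z.2]
  have h2 : z.2 = 0 := by nlinarith [sq_nonneg z.1, sq_nonneg z.2]
  exact Prod.ext h1 h2

lemma nrm_le_add (z : ℝ × ℝ) : nrm z ≤ |z.1| + |z.2| := by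
  apply Real.sqrt_le_iff.2 ⟨by positivity, ?_⟩
  nlinarith [abs_nonneg z.1, abs_nonneg z.2, sq_abs z.1, sq_abs z.2,
    mul_nonneg (abs_nonneg z.1) (abs_nonneg z.2)]

lemma measurable_nrm : Measurable nrm := by
  unfold nrm; fun_prop

lemma measurable_ang : Measurable ang := by
  have hm : Measurable fun x : ℝ × ℝ => Complex.arg ⟨x.1, x.2⟩ :=
    Complex.measurable_arg.comp
      (Complex.measurableEquivRealProd.symm.measurable)
  exact Measurable.ite (measurableSet_eq_fun hm measurable_const) measurable_const hm

lemma measurable_Wkernel {s : ℝ} {Ω : ℝ → ℝ} (hΩ : Measurable Ω) :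
    Measurable (Wkernel s Ω) := by
  refine Measurable.ite (measurableSet_singleton 0) measurable_const ?_
  have h1 := measurable_nrm
  have h2 := hΩ.comp measurable_ang
  exact (((h1.pow_const (-s)).mul h2).add (h1.pow_const 2)).ennreal_ofReal

lemma cos_ang {z : ℝ × ℝ} (hz : z ≠ 0) : |Real.cos (ang z)| = |z.1| / nrm z := by
  have hz' : (⟨z.1, z.2⟩ : ℂ) ≠ 0 := by
    intro h
    exact hz (Prod.ext (congrArg Complex.re h) (congrArg Complex.im h))
  have h1 : |Real.cos (ang z)| = |Real.cos (Complex.arg ⟨z.1, z.2⟩)| := by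
    unfold ang
    split_ifs with h
    · rw [h, Real.cos_neg]
    · rfl
  rw [h1, Complex.cos_arg hz', abs_div, abs_norm, Complex.norm_eq_sqrt_sq_add_sq]
  rfl

/-- The growth hypothesis on `[0, π]`, transported by `π`-periodicity to all directions and
rewritten through `|cos θ| ≤ |θ - π / 2|`. -/
lemma omega_ang_lower {ω : ℝ → ℝ} (hper : ∀ θ, ω (θ + π) = ω θ) {κ c : ℝ} (hκ : 0 ≤ κ)
    (hc : 0 < c) (hlow : ∀ θ ∈ Set.Icc (0 : ℝ) π, c * |θ - π / 2| ^ κ ≤ ω θ)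
    {z : ℝ × ℝ} (hz : z ≠ 0) : c * (|z.1| / nrm z) ^ κ ≤ ω (ang z) := by
  have key : ∀ θ ∈ Set.Icc (0 : ℝ) π, c * |Real.cos θ| ^ κ ≤ ω θ := by
    intro θ hθ
    refine le_trans ?_ (hlow θ hθ)
    have : |Real.cos θ| ≤ |θ - π / 2| := by
      rw [← Real.sin_pi_div_two_sub, abs_sub_comm]
      exact Real.abs_sin_le_abs
    gcongr
  have hr : ang z ∈ Set.Icc (-π) π := by
    unfold ang
    have := Complex.neg_pi_lt_arg ⟨z.1, z.2⟩
    have := Complex.arg_le_pi ⟨z.1, z.2⟩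
    split_ifs <;> constructor <;> linarith [Real.pi_pos]
  rw [← cos_ang hz]
  rcases le_total 0 (ang z) with h | h
  · exact key _ ⟨h, hr.2⟩
  · have := key (ang z + π) ⟨by linarith [hr.1], by linarith⟩
    rwa [hper, Real.cos_add_pi, abs_neg] at this

/-- On the vertical axis the anisotropic part of the kernel vanishes. -/
lemma omega_ang_vertical {ω : ℝ → ℝ} (hper : ∀ θ, ω (θ + π) = ω θ) (h0 : ω (π / 2) = 0)
    {t : ℝ} (ht : t ≠ 0) : ω (ang (0, t)) = 0 := by
  have hne : ((0, t) : ℝ × ℝ) ≠ 0 := fun h => ht (congrArg Prod.snd h)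
  have hcos : Real.cos (ang (0, t)) = 0 := by
    have := cos_ang hne
    simpa using this
  have hm : ω (-(π / 2)) = 0 := by
    rw [← hper, ← h0]; congr 1; ring
  have hr : ang (0, t) ∈ Set.Icc (-π) π := by
    unfold ang
    have := Complex.neg_pi_lt_arg ⟨0, t⟩
    have := Complex.arg_le_pi ⟨0, t⟩
    dsimp only
    split_ifs <;> constructor <;> linarith [Real.pi_pos]
  -- a zero of the cosine in `[-π, π]` is `±π / 2`
  have hpi := Real.pi_pos
  rcases le_total 0 (ang (0, t)) with h | h
  · have : ang (0, t) = π / 2 := by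
      apply Real.injOn_cos ⟨h, hr.2⟩ ⟨by linarith, by linarith⟩
      rw [hcos, Real.cos_pi_div_two]
    rw [this, h0]
  · have : -ang (0, t) = π / 2 := by
      apply Real.injOn_cos ⟨by linarith, by linarith [hr.1]⟩ ⟨by linarith, by linarith⟩
      rw [Real.cos_neg, hcos, Real.cos_pi_div_two]
    rw [show ang (0, t) = -(π / 2) by linarith, hm]

/-- The attractive part of the kernel. -/
lemma sq_le_Wkernel {s : ℝ} {Ω : ℝ → ℝ} (hΩ : ∀ θ, 0 ≤ Ω θ) (z : ℝ × ℝ) :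
    ENNReal.ofReal (z.1 ^ 2 + z.2 ^ 2) ≤ Wkernel s Ω z := by
  unfold Wkernel
  split_ifs with h
  · exact le_top
  · apply ENNReal.ofReal_le_ofReal
    rw [nrm_sq]
    have := mul_nonneg (Real.rpow_nonneg (nrm_nonneg z) (-s)) (hΩ (ang z))
    linarith

/-- If `a ≥ t`, then already `a ≤ a (a / t) ^ (κ - 1)`; this elementary bound replaces Jensen's
inequality for the power `κ`. -/
lemma le_add_rpow {a t κ : ℝ} (ha : 0 ≤ a) (ht : 0 < t) (hκ : 1 ≤ κ) :
    a ≤ t + t ^ (1 - κ) * a ^ κ := by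
  rcases le_total a t with h | h
  · have : 0 ≤ t ^ (1 - κ) * a ^ κ := by positivity
    linarith
  · have ha' : 0 < a := ht.trans_le h
    have h1 : a ^ κ = a * a ^ (κ - 1) := by
      rw [Real.rpow_sub_one ha'.ne']; field_simp
    have h2 : t ^ (1 - κ) = (t ^ (κ - 1))⁻¹ := by
      rw [← Real.rpow_neg ht.le]; congr 1; ring
    have h3 : t ^ (κ - 1) ≤ a ^ (κ - 1) := Real.rpow_le_rpow ht.le h (by linarith)
    have h4 : 0 < t ^ (κ - 1) := by positivity
    have h5 : 1 ≤ (t ^ (κ - 1))⁻¹ * a ^ (κ - 1) := by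
      rw [inv_mul_eq_div, le_div_iff₀ h4]; linarith
    rw [h1, h2]
    nlinarith

/-- In a ball of radius `R`, the anisotropic part of the kernel controls the horizontal
displacement, up to a free threshold `t`. -/
lemma abs_fst_le_Wkernel {s : ℝ} (hs : 0 < s) {ω : ℝ → ℝ} (hper : ∀ θ, ω (θ + π) = ω θ)
    {κ c α R t : ℝ} (hκ : 2 ≤ κ) (hc : 0 < c) (hα : 0 < α) (hR : 0 < R) (ht : 0 < t)
    (hlow : ∀ θ ∈ Set.Icc (0 : ℝ) π, c * |θ - π / 2| ^ κ ≤ ω θ)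
    {z : ℝ × ℝ} (hz : nrm z ≤ R) :
    ENNReal.ofReal |z.1| ≤ ENNReal.ofReal t +
      ENNReal.ofReal (t ^ (1 - κ) * R ^ (s + κ) / (c * α)) *
        Wkernel s (fun θ => 1 + α * ω θ) z := by
  by_cases h0 : z = 0
  · simp [h0]
  have hn := nrm_pos h0
  have hω := omega_ang_lower hper (by linarith) hc hlow h0
  have hcoef : 0 ≤ t ^ (1 - κ) * R ^ (s + κ) / (c * α) := by positivity
  rw [Wkernel, if_neg h0, ← ENNReal.ofReal_mul hcoef]
  refine le_trans (ENNReal.ofReal_le_ofReal ?_) ENNReal.ofReal_add_le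
  refine (le_add_rpow (abs_nonneg z.1) ht (by linarith : (1 : ℝ) ≤ κ)).trans ?_
  have hns : 0 < nrm z ^ (-s) := by positivity
  have hW : α * c * (nrm z ^ (-s) * (|z.1| / nrm z) ^ κ) ≤
      nrm z ^ (-s) * (1 + α * ω (ang z)) + nrm z ^ 2 := by
    have : nrm z ^ (-s) * (α * (c * (|z.1| / nrm z) ^ κ)) ≤ nrm z ^ (-s) * (α * ω (ang z)) := by
      gcongr
    nlinarith [sq_nonneg (nrm z)]
  have hmul := mul_le_mul_of_nonneg_left hW hcoef
  have heq : nrm z ^ (-s) * (|z.1| / nrm z) ^ κ = |z.1| ^ κ / nrm z ^ (s + κ) := by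
    rw [Real.div_rpow (abs_nonneg _) hn.le, Real.rpow_neg hn.le, Real.rpow_add hn]
    field_simp
  have hpow : nrm z ^ (s + κ) ≤ R ^ (s + κ) := Real.rpow_le_rpow hn.le hz (by linarith)
  have hpp : 0 < nrm z ^ (s + κ) := by positivity
  have hfin : t ^ (1 - κ) * |z.1| ^ κ ≤ t ^ (1 - κ) * R ^ (s + κ) / (c * α) *
      (α * c * (nrm z ^ (-s) * (|z.1| / nrm z) ^ κ)) := by
    rw [heq]
    have : t ^ (1 - κ) * R ^ (s + κ) / (c * α) * (α * c * (|z.1| ^ κ / nrm z ^ (s + κ))) =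
        t ^ (1 - κ) * |z.1| ^ κ * (R ^ (s + κ) / nrm z ^ (s + κ)) := by
      field_simp
    rw [this]
    apply le_mul_of_one_le_right (by positivity)
    rwa [le_div_iff₀ hpp, one_mul]
  linarith

/-! ### Energy and potential of a minimizer -/

/-- The interaction energy of Lebesgue measure on a vertical unit segment is finite, because
`s < 1`, and it does not depend on `α`. -/
lemma energy_bound {s : ℝ} (hs0 : 0 < s) (hs1 : s < 1) {ω : ℝ → ℝ} (hcont : Continuous ω)
    (hper : ∀ θ, ω (θ + π) = ω θ) (h0 : ω (π / 2) = 0) :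
    ∃ K : ℝ, 0 < K ∧ ∀ α : ℝ, ∃ μ : Measure (ℝ × ℝ), IsProbabilityMeasure μ ∧
      ∫⁻ x, ∫⁻ y, Wkernel s (fun θ => 1 + α * ω θ) (x - y) ∂μ ∂μ ≤ ENNReal.ofReal K := by
  set g : ℝ → ℝ≥0∞ := fun v => ENNReal.ofReal (|v| ^ (-s) + 1)
  have hg : Measurable g := by fun_prop
  have hfin : ∫⁻ v in Set.Icc (-1 : ℝ) 1, g v < ⊤ := by
    have h1 : IntegrableOn (fun v : ℝ => |v| ^ (-s)) (Set.Icc (-1) 1) := by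
      have hp : IntegrableOn (fun v : ℝ => |v| ^ (-s)) (Set.Ioc 0 1) := by
        have := (intervalIntegral.intervalIntegrable_rpow' (a := 0) (b := 1) (r := -s)
          (by linarith))
        rw [intervalIntegrable_iff_integrableOn_Ioc_of_le zero_le_one] at this
        refine this.congr_fun (fun v hv => ?_) measurableSet_Ioc
        simp only [abs_of_pos hv.1]
      have hI : IntervalIntegrable (fun v : ℝ => |v| ^ (-s)) volume 0 1 :=
        (intervalIntegrable_iff_integrableOn_Ioc_of_le zero_le_one).2 hp
      have hI' : IntervalIntegrable (fun v : ℝ => |v| ^ (-s)) volume (-1) 0 := by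
        have := (hI.comp_sub_left 0).symm
        simpa using this
      have := hI'.trans hI
      rwa [intervalIntegrable_iff_integrableOn_Icc_of_le (by norm_num)] at this
    have h2 : IntegrableOn (fun v : ℝ => |v| ^ (-s) + 1) (Set.Icc (-1) 1) :=
      h1.add (integrableOn_const (by simp))
    have := h2.lintegral_lt_top
    exact this
  set L := ∫⁻ v in Set.Icc (-1 : ℝ) 1, g v
  refine ⟨L.toReal + 1, by positivity, fun α => ?_⟩
  set ν : Measure ℝ := volume.restrict (Set.Icc (0 : ℝ) 1)
  have hν : IsProbabilityMeasure ν := ⟨by simp [ν]⟩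
  have hemb : Measurable fun t : ℝ => ((0 : ℝ), t) := by fun_prop
  have hW : Measurable (Wkernel s fun θ => 1 + α * ω θ) :=
    measurable_Wkernel (by fun_prop)
  refine ⟨ν.map fun t => (0, t), Measure.isProbabilityMeasure_map hemb.aemeasurable, ?_⟩
  have hW2 : Measurable fun p : (ℝ × ℝ) × (ℝ × ℝ) =>
      Wkernel s (fun θ => 1 + α * ω θ) (p.1 - p.2) := hW.comp (by fun_prop)
  have := hν
  have : IsProbabilityMeasure (ν.map fun t : ℝ => ((0 : ℝ), t)) :=
    Measure.isProbabilityMeasure_map hemb.aemeasurable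
  rw [lintegral_map hW2.lintegral_prod_right' hemb]
  have hinner : ∀ t ∈ Set.Icc (0 : ℝ) 1,
      ∫⁻ y, Wkernel s (fun θ => 1 + α * ω θ) (((0 : ℝ), t) - y)
        ∂(ν.map fun t : ℝ => ((0 : ℝ), t)) ≤ L := by
    intro t ht
    have hWt : Measurable fun y : ℝ × ℝ =>
        Wkernel s (fun θ => 1 + α * ω θ) (((0 : ℝ), t) - y) :=
      hW.comp (measurable_const.sub measurable_id)
    rw [lintegral_map hWt hemb]
    have hle : ∀ᵐ u ∂ν, Wkernel s (fun θ => 1 + α * ω θ) (((0 : ℝ), t) - (0, u)) ≤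
        (Set.Icc (-1 : ℝ) 1).indicator g (t - u) := by
      have hne : ∀ᵐ u ∂ν, u ≠ t := by
        apply ae_restrict_of_ae
        simp [ae_iff]
      filter_upwards [hne, ae_restrict_mem measurableSet_Icc] with u hu hmem
      have htu : t - u ≠ 0 := fun h => hu (by linarith)
      have hmem' : t - u ∈ Set.Icc (-1 : ℝ) 1 :=
        ⟨by linarith [ht.1, hmem.2], by linarith [ht.2, hmem.1]⟩
      have hz : (((0 : ℝ), t) - (0, u)) = ((0 : ℝ), t - u) := by simp
      have hz0 : ((0 : ℝ), t - u) ≠ 0 := fun h => htu (congrArg Prod.snd h)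
      rw [hz, Wkernel, if_neg hz0, Set.indicator_of_mem hmem',
        omega_ang_vertical hper h0 htu]
      apply ENNReal.ofReal_le_ofReal
      have hn : nrm (0, t - u) = |t - u| := by
        simp [nrm, Real.sqrt_sq_eq_abs]
      rw [hn]
      have : |t - u| ≤ 1 := abs_le.2 hmem'
      have : |t - u| ^ 2 ≤ 1 := by
        nlinarith [abs_nonneg (t - u)]
      linarith
    calc _ ≤ ∫⁻ u, (Set.Icc (-1 : ℝ) 1).indicator g (t - u) ∂ν := lintegral_mono_ae hle
      _ ≤ ∫⁻ u, (Set.Icc (-1 : ℝ) 1).indicator g (t - u) :=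
          lintegral_mono' Measure.restrict_le_self le_rfl
      _ = ∫⁻ u, (Set.Icc (-1 : ℝ) 1).indicator g u := lintegral_sub_left_eq_self _ t
      _ = L := lintegral_indicator measurableSet_Icc _
  calc _ ≤ ∫⁻ t, L ∂ν := by
        apply setLIntegral_mono' measurableSet_Icc hinner
    _ = L := by simp
    _ = ENNReal.ofReal L.toReal := (ENNReal.ofReal_toReal hfin.ne).symm
    _ ≤ _ := ENNReal.ofReal_le_ofReal (by linarith)

/-- A one-sided Euler-Lagrange inequality with a lossy constant: comparing a minimizer `ρ` with
its normalized restriction to the set where the potential `V = W * ρ` is at most `3 K` gives `V ≤ 3 K`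
almost everywhere, where `K` bounds the double integral of `W`, that is, twice the energy. -/
lemma potential_bound {ρ : Measure (ℝ × ℝ)} [IsProbabilityMeasure ρ]
    {W : ℝ × ℝ → ℝ≥0∞} (hW : Measurable W) {K : ℝ} (hK : 0 < K)
    (hρK : ∫⁻ x, ∫⁻ y, W (x - y) ∂ρ ∂ρ ≤ ENNReal.ofReal K)
    (hmin : ∀ μ : Measure (ℝ × ℝ), IsProbabilityMeasure μ →
      ∫⁻ x, ∫⁻ y, W (x - y) ∂ρ ∂ρ ≤ ∫⁻ x, ∫⁻ y, W (x - y) ∂μ ∂μ) :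
    ∀ᵐ x ∂ρ, ∫⁻ y, W (x - y) ∂ρ ≤ ENNReal.ofReal (3 * K) := by
  set V : ℝ × ℝ → ℝ≥0∞ := fun x => ∫⁻ y, W (x - y) ∂ρ with hVdef
  have hV : Measurable V :=
    (hW.comp (by fun_prop : Measurable fun p : (ℝ × ℝ) × (ℝ × ℝ) => p.1 - p.2)).lintegral_prod_right'
  set A : Set (ℝ × ℝ) := {x | V x ≤ ENNReal.ofReal (3 * K)}
  have hA : MeasurableSet A := measurableSet_le hV measurable_const
  set l := ∫⁻ x, V x ∂ρ
  change l ≤ _ at hρK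
  have hl : l ≠ ⊤ := ne_top_of_le_ne_top ENNReal.ofReal_ne_top hρK
  have hsplit : ∫⁻ x in A, V x ∂ρ + ∫⁻ x in Aᶜ, V x ∂ρ = l := lintegral_add_compl V hA
  have h1 : ρ A ^ 2 * l ≤ ∫⁻ x in A, V x ∂ρ := by
    by_cases hm : ρ A = 0
    · simp [hm]
    have hmt : ρ A ≠ ⊤ := measure_ne_top _ _
    have hprob : IsProbabilityMeasure ((ρ A)⁻¹ • ρ.restrict A) :=
      ⟨by simp [ENNReal.inv_mul_cancel hm hmt]⟩
    have := hmin _ hprob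
    simp only [lintegral_smul_measure, smul_eq_mul] at this
    rw [lintegral_const_mul' _ _ (ENNReal.inv_ne_top.2 hm)] at this
    calc ρ A ^ 2 * l ≤ ρ A ^ 2 * ((ρ A)⁻¹ * ((ρ A)⁻¹ *
          ∫⁻ x in A, ∫⁻ y in A, W (x - y) ∂ρ ∂ρ)) := by gcongr
      _ = (ρ A * (ρ A)⁻¹) * (ρ A * (ρ A)⁻¹) * ∫⁻ x in A, ∫⁻ y in A, W (x - y) ∂ρ ∂ρ := by ring
      _ = ∫⁻ x in A, ∫⁻ y in A, W (x - y) ∂ρ ∂ρ := by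
          rw [ENNReal.mul_inv_cancel hm hmt]; simp
      _ ≤ _ := lintegral_mono fun x => lintegral_mono' Measure.restrict_le_self le_rfl
  have h2 : ENNReal.ofReal (3 * K) * ρ Aᶜ ≤ ∫⁻ x in Aᶜ, V x ∂ρ := by
    rw [← setLIntegral_const]
    refine setLIntegral_mono' hA.compl fun x hx => ?_
    have hx' : ¬ V x ≤ ENNReal.ofReal (3 * K) := hx
    exact (not_le.1 hx').le
  have hsum : ρ A + ρ Aᶜ = 1 := by rw [measure_add_measure_compl hA, measure_univ]
  have h3 : ρ A ^ 2 * l + ENNReal.ofReal (3 * K) * ρ Aᶜ ≤ l := by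
    exact (add_le_add h1 h2).trans hsplit.le
  have h4 := ENNReal.toReal_mono hl h3
  have hsum' : ρ.real A + ρ.real Aᶜ = 1 := by
    have := congrArg ENNReal.toReal hsum
    rwa [ENNReal.toReal_add (measure_ne_top _ _) (measure_ne_top _ _), ENNReal.toReal_one] at this
  rw [ENNReal.toReal_add (ENNReal.mul_ne_top (by simp) hl)
    (ENNReal.mul_ne_top ENNReal.ofReal_ne_top (measure_ne_top _ _)), ENNReal.toReal_mul,
    ENNReal.toReal_mul, ENNReal.toReal_pow, ENNReal.toReal_ofReal (by positivity)] at h4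
  change ρ.real A ^ 2 * _ + _ * ρ.real Aᶜ ≤ _ at h4
  have hlK : l.toReal ≤ K := ENNReal.toReal_le_of_le_ofReal hK.le hρK
  have hl0 : 0 ≤ l.toReal := ENNReal.toReal_nonneg
  have hb0 : 0 ≤ ρ.real Aᶜ := measureReal_nonneg
  have hzero : ρ.real Aᶜ = 0 := by
    have ha : ρ.real A = 1 - ρ.real Aᶜ := by linarith
    rw [ha] at h4
    by_contra hne
    have hb : 0 < ρ.real Aᶜ := lt_of_le_of_ne hb0 (Ne.symm hne)
    nlinarith [mul_nonneg hl0 (sq_nonneg (ρ.real Aᶜ)), mul_pos hK hb,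
      mul_le_mul_of_nonneg_right hlK hb0]
  rw [measureReal_eq_zero_iff] at hzero
  exact hzero

/-! ### Confinement of the support -/

/-- For a centered measure, `f x = ∫ f (x - y) dρ(y)` for every continuous linear `f`. -/
lemma abs_le_of_lintegral {ρ : Measure (ℝ × ℝ)} [IsProbabilityMeasure ρ]
    (hint : Integrable (fun y : ℝ × ℝ => y) ρ) (hmean : ∫ y, y ∂ρ = 0)
    (f : ℝ × ℝ →L[ℝ] ℝ) (x : ℝ × ℝ) {B : ℝ} (hB : 0 ≤ B)
    (h : ∫⁻ y, ENNReal.ofReal |f (x - y)| ∂ρ ≤ ENNReal.ofReal B) : |f x| ≤ B := by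
  have h1 : ∫ y, f (x - y) ∂ρ = f x := by
    have hsub : Integrable (fun y => x - y) ρ := (integrable_const x).sub hint
    rw [f.integral_comp_comm hsub, integral_sub (integrable_const x) hint, hmean]
    simp
  have h2 := enorm_integral_le_lintegral_enorm (μ := ρ) fun y => f (x - y)
  rw [h1] at h2
  simp only [Real.enorm_eq_ofReal_abs] at h2
  exact (ENNReal.ofReal_le_ofReal_iff hB).1 (h2.trans h)

lemma msupport_subset_of_ae {ρ : Measure (ℝ × ℝ)} {F : Set (ℝ × ℝ)} (hF : IsClosed F)
    (h : ∀ᵐ x ∂ρ, x ∈ F) : msupport ρ ⊆ F := by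
  intro x hx
  by_contra hxF
  exact (hx Fᶜ (hF.isOpen_compl.mem_nhds hxF)).ne' h

/-- if `ω(θ) ≥ c |θ - π/2|^κ` on `[0,π]` with `κ ≥ 2`, then any zero-center-
of-mass minimizer of `E_α` has horizontal support width at most `C α^{-1/(κ+1)}`. -/
theorem statement12 (s : ℝ) (hs0 : 0 < s) (hs1 : s < 1) (ω : ℝ → ℝ) (hω : Satisfiesh ω)
    (κ c : ℝ) (hκ : 2 ≤ κ) (hc : 0 < c)
    (hlow : ∀ θ ∈ Set.Icc (0 : ℝ) π, c * |θ - π / 2| ^ κ ≤ ω θ) :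
    ∃ C : ℝ, 0 < C ∧ ∀ α : ℝ, 0 < α →
      ∀ ρ : Measure (ℝ × ℝ), IsMinimizer (energy s fun θ => 1 + α * ω θ) ρ →
        (∫ x, x ∂ρ) = 0 →
        ∀ x ∈ msupport ρ, |x.1| ≤ C * α ^ (-(1 / (κ + 1))) := by
  obtain ⟨hsm, -, hnn, -, hper, h0⟩ := hω
  have hcont : Continuous ω := hsm.continuous
  obtain ⟨K, hK, hKμ⟩ := energy_bound hs0 hs1 hcont hper h0
  -- `M` bounds the potential, `1 + M` the coordinates and `R` the diameter of the support
  set M : ℝ := 3 * K with hM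
  have hMpos : 0 < M := by positivity
  set R : ℝ := 4 * (1 + M) with hR
  have hRpos : 0 < R := by positivity
  set D : ℝ := R ^ (s + κ) / c * M with hD
  have hDpos : 0 < D := by positivity
  refine ⟨1 + M + D, by positivity, fun α hα ρ hmin hmean => ?_⟩
  obtain ⟨hprob, hmin⟩ := hmin
  set W := Wkernel s fun θ => 1 + α * ω θ with hWdef
  have hW : Measurable W := measurable_Wkernel (by fun_prop)
  have hΩ : ∀ θ, 0 ≤ 1 + α * ω θ := fun θ => by
    have := mul_nonneg hα.le (hnn θ)
    linarith
  have hmin' : ∀ μ : Measure (ℝ × ℝ), IsProbabilityMeasure μ →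
      ∫⁻ x, ∫⁻ y, W (x - y) ∂ρ ∂ρ ≤ ∫⁻ x, ∫⁻ y, W (x - y) ∂μ ∂μ := by
    intro μ hμ
    exact (ENNReal.mul_le_mul_iff_right (by simp) (by simp)).1 (hmin μ hμ)
  have hρK : ∫⁻ x, ∫⁻ y, W (x - y) ∂ρ ∂ρ ≤ ENNReal.ofReal K := by
    obtain ⟨μ, hμ, hle⟩ := hKμ α
    exact (hmin' μ hμ).trans hle
  have hpot := potential_bound hW hK hρK hmin'
  -- `|a| ≤ 1 + a²` bounds both coordinates of the displacement by the quadratic part of `W`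
  have hcoord : ∀ f : ℝ × ℝ →L[ℝ] ℝ, (∀ z, f z ^ 2 ≤ z.1 ^ 2 + z.2 ^ 2) → ∀ x : ℝ × ℝ,
      ∫⁻ y, W (x - y) ∂ρ ≤ ENNReal.ofReal M →
      ∫⁻ y, ENNReal.ofReal |f (x - y)| ∂ρ ≤ ENNReal.ofReal (1 + M) := by
    intro f hf x hx
    calc ∫⁻ y, ENNReal.ofReal |f (x - y)| ∂ρ ≤ ∫⁻ y, (1 + W (x - y)) ∂ρ := by
          refine lintegral_mono fun y => ?_
          refine le_trans ?_ (add_le_add_right (sq_le_Wkernel hΩ (x - y)) 1)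
          rw [← ENNReal.ofReal_one, ← ENNReal.ofReal_add zero_le_one (by positivity)]
          apply ENNReal.ofReal_le_ofReal
          have := hf (x - y)
          nlinarith [sq_abs (f (x - y)), sq_nonneg (|f (x - y)| - 1), abs_nonneg (f (x - y))]
      _ = 1 + ∫⁻ y, W (x - y) ∂ρ := by
          rw [lintegral_add_left measurable_const]; simp
      _ ≤ 1 + ENNReal.ofReal M := by gcongr
      _ = ENNReal.ofReal (1 + M) := by
          rw [ENNReal.ofReal_add zero_le_one hMpos.le, ENNReal.ofReal_one]
  have hf1 : ∀ z : ℝ × ℝ, ContinuousLinearMap.fst ℝ ℝ ℝ z ^ 2 ≤ z.1 ^ 2 + z.2 ^ 2 := by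
    intro z; simp; positivity
  have hf2 : ∀ z : ℝ × ℝ, ContinuousLinearMap.snd ℝ ℝ ℝ z ^ 2 ≤ z.1 ^ 2 + z.2 ^ 2 := by
    intro z; simp; positivity
  have hint : Integrable (fun y : ℝ × ℝ => y) ρ := by
    obtain ⟨x, hx⟩ := hpot.exists
    have key : ∀ f : ℝ × ℝ →L[ℝ] ℝ, (∀ z, f z ^ 2 ≤ z.1 ^ 2 + z.2 ^ 2) →
        Integrable (fun y => f y) ρ := by
      intro f hf
      have hi : Integrable (fun y => f (x - y)) ρ := by
        refine ⟨by fun_prop, ?_⟩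
        simp only [HasFiniteIntegral, Real.enorm_eq_ofReal_abs]
        exact (hcoord f hf x hx).trans_lt ENNReal.ofReal_lt_top
      have := (integrable_const (f x)).sub hi
      refine this.congr (ae_of_all _ fun y => ?_)
      simp
    exact (key _ hf1).prodMk (key _ hf2)
  have hbox : ∀ᵐ x ∂ρ, |x.1| ≤ 1 + M ∧ |x.2| ≤ 1 + M := by
    filter_upwards [hpot] with x hx
    exact ⟨abs_le_of_lintegral hint hmean (.fst ℝ ℝ ℝ) x (by positivity) (hcoord _ hf1 x hx),
      abs_le_of_lintegral hint hmean (.snd ℝ ℝ ℝ) x (by positivity) (hcoord _ hf2 x hx)⟩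
  have hclosed : IsClosed {x : ℝ × ℝ | |x.1| ≤ (1 + M + D) * α ^ (-(1 / (κ + 1)))} :=
    isClosed_le (by fun_prop) continuous_const
  refine fun x hx => msupport_subset_of_ae hclosed ?_ hx
  clear hx x
  filter_upwards [hpot, hbox] with x hx hxb
  set t : ℝ := α ^ (-(1 / (κ + 1))) with ht
  have htpos : 0 < t := by positivity
  rcases le_total α 1 with hα1 | hα1
  · have h1t : 1 ≤ t := by
      apply Real.one_le_rpow_of_pos_of_le_one_of_nonpos hα hα1
      have : 0 ≤ 1 / (κ + 1) := by positivity
      linarith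
    nlinarith [hxb.1, mul_nonneg hMpos.le (sub_nonneg.2 h1t), mul_pos hDpos htpos]
  · set q : ℝ := t ^ (1 - κ) * R ^ (s + κ) / (c * α) with hq
    have hqpos : 0 < q := by positivity
    have hdisp : ∫⁻ y, ENNReal.ofReal |ContinuousLinearMap.fst ℝ ℝ ℝ (x - y)| ∂ρ ≤
        ENNReal.ofReal (t + q * M) := by
      calc _ ≤ ∫⁻ y, (ENNReal.ofReal t + ENNReal.ofReal q * W (x - y)) ∂ρ := by
            refine lintegral_mono_ae ?_
            filter_upwards [hbox] with y hyb
            refine abs_fst_le_Wkernel hs0 hper hκ hc hα hRpos htpos hlow ?_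
            refine (nrm_le_add _).trans ?_
            have e1 : |(x - y).1| ≤ |x.1| + |y.1| := abs_sub _ _
            have e2 : |(x - y).2| ≤ |x.2| + |y.2| := abs_sub _ _
            linarith [hxb.1, hxb.2, hyb.1, hyb.2]
        _ = ENNReal.ofReal t + ENNReal.ofReal q * ∫⁻ y, W (x - y) ∂ρ := by
            rw [lintegral_add_left measurable_const,
              lintegral_const_mul' _ _ ENNReal.ofReal_ne_top]
            simp
        _ ≤ ENNReal.ofReal t + ENNReal.ofReal q * ENNReal.ofReal M := by gcongr
        _ = _ := by
            rw [← ENNReal.ofReal_mul hqpos.le, ← ENNReal.ofReal_add htpos.le (by positivity)]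
    have hx1 := abs_le_of_lintegral hint hmean (.fst ℝ ℝ ℝ) x (by positivity) hdisp
    change |x.1| ≤ _ at hx1
    -- `t ^ (1 - κ) / α = t ^ 2`, and `t ≤ 1` here
    have ht1 : t ≤ 1 := by
      apply Real.rpow_le_one_of_one_le_of_nonpos hα1
      have : 0 ≤ 1 / (κ + 1) := by positivity
      linarith
    have hpow : t ^ (1 - κ) / α = t ^ 2 := by
      have hκ1 : κ + 1 ≠ 0 := by linarith
      rw [ht, ← Real.rpow_mul hα.le, ← Real.rpow_natCast, ← Real.rpow_mul hα.le,
        ← Real.rpow_sub_one hα.ne']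
      congr 1
      push_cast
      field_simp
      ring
    have hqM : q * M = t ^ 2 * D := by
      rw [← hpow, hq, hD]; field_simp
    have : t ^ 2 * D ≤ t * D := by
      apply mul_le_mul_of_nonneg_right _ hDpos.le
      nlinarith
    nlinarith [mul_pos hMpos htpos]

end Aniso
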